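/- Let p ≥ 2 and let {E_n} be a sequence of convex, compact subsets of ℝ^p. Assume that the boundaries F_n := ∂E_n converge in the Painlevé–Kuratowski sense to a nonempty compact set F ⊂ ℝ^p. Then the sets E_n converge in the Painlevé–Kuratowski sense to E := convexHull(F), and moreover ∂E = F. -/

import Mathlib

/-!
Write `C` for the closure of `conv F`.

*Boundedness.* Take `R` with `F ⊆ ball 0 R`. By compactness the sphere of radius `R` misses
`∂E_n` for all large `n`, while `∂E_n` meets the ball because `F` is nonempty. The sphere is
connected (here `p ≥ 2` enters), so it is either contained in `E_n` or disjoint from it. In the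
first case the whole closed ball lies in `E_n` by convexity, which is impossible as `∂E_n` meets
the open ball; in the second case convexity keeps `E_n` inside the ball. So `∂E_n ⊆ ball 0 R`
eventually (`eventually_frontier_subset_ball`).

*Limits of `E_n`.* `Liminf E_n` is convex and contains `F`, hence `conv F`. If a point of
`Limsup E_n` were strictly separated from `C` by a functional `f`, the maximum points of `f` on
`E_n`, which lie in `∂E_n`, would accumulate at a point of `F` violating the separation. So
`conv F ⊆ Liminf E_n ⊆ Limsup E_n ⊆ C`.

*Boundary.* Near a point of `C \ F` a fixed ball misses `∂E_n` and meets `E_n`, so it is contained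
in `E_n`, and hence in `C`; this gives `∂C ⊆ F`. Since a bounded set is contained in the
convex hull of its boundary, `C = conv F`, that is, `conv F` is closed. Finally, a point of `F` is a
limit of points outside `E_n`; separating these from `E_n` by unit vectors and passing to the limit
shows that it is not interior to `conv F ⊆ Liminf E_n`.
-/

open Filter Topology Metric MeasureTheory

/-- Kuratowski lower limit of a sequence of sets. -/
def KLiminf {α : Type*} [TopologicalSpace α] (A : ℕ → Set α) : Set α :=
  {x | ∃ u : ℕ → α, (∀ n, u n ∈ A n) ∧ Tendsto u atTop (𝓝 x)}

/-- Kuratowski upper limit of a sequence of sets. -/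
def KLimsup {α : Type*} [TopologicalSpace α] (A : ℕ → Set α) : Set α :=
  {x | ∃ φ : ℕ → ℕ, StrictMono φ ∧
    ∃ u : ℕ → α, (∀ n, u n ∈ A (φ n)) ∧ Tendsto u atTop (𝓝 x)}

/-- Painlevé–Kuratowski convergence of a sequence of sets to `L`. -/
def KConv {α : Type*} [TopologicalSpace α] (A : ℕ → Set α) (L : Set α) : Prop :=
  KLiminf A = L ∧ KLimsup A = L

/-- A preconnected set that meets `E` without being contained in it meets the frontier of `E`. -/
lemma IsPreconnected.inter_frontier_nonempty_of_not_subset {α : Type*} [TopologicalSpace α]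
    {s E : Set α} (hs : IsPreconnected s) (h1 : (s ∩ E).Nonempty) (h2 : ¬ s ⊆ E) :
    (s ∩ frontier E).Nonempty := by
  by_contra h
  rw [Set.not_nonempty_iff_eq_empty] at h
  have key : ∀ x ∈ s, x ∈ closure E → x ∈ interior E := by
    intro x hx hc
    by_contra hi
    have : x ∈ s ∩ frontier E := ⟨hx, hc, hi⟩
    rw [h] at this
    exact this
  refine h2 ((hs.subset_left_of_subset_union isOpen_interior
    (isClosed_closure (s := E)).isOpen_compl ?_ ?_ ?_).trans interior_subset)
  · exact Set.disjoint_left.2 fun x hx hx' => hx' (subset_closure (interior_subset hx))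
  · intro x hx
    by_cases hc : x ∈ closure E
    · exact Or.inl (key x hx hc)
    · exact Or.inr hc
  · obtain ⟨x, hx, hxE⟩ := h1
    exact ⟨x, hx, key x hx (subset_closure hxE)⟩

lemma KLiminf_subset_KLimsup {α : Type*} [TopologicalSpace α] (A : ℕ → Set α) :
    KLiminf A ⊆ KLimsup A := by
  rintro x ⟨u, hu, hx⟩
  exact ⟨id, strictMono_id, u, hu, hx⟩

lemma KLiminf_mono {α : Type*} [TopologicalSpace α] {A B : ℕ → Set α} (h : ∀ n, A n ⊆ B n) :
    KLiminf A ⊆ KLiminf B := by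
  rintro x ⟨u, hu, hx⟩
  exact ⟨u, fun n => h n (hu n), hx⟩

lemma convex_KLiminf {V : Type*} [NormedAddCommGroup V] [NormedSpace ℝ V] {A : ℕ → Set V}
    (h : ∀ n, Convex ℝ (A n)) : Convex ℝ (KLiminf A) := by
  rintro x ⟨u, hu, hx⟩ y ⟨v, hv, hy⟩ a b ha hb hab
  exact ⟨fun n => a • u n + b • v n, fun n => h n (hu n) (hv n) ha hb hab,
    (hx.const_smul a).add (hy.const_smul b)⟩

/-- Compactness principle for upper limits: if `A n` meets the compact set `K` for infinitely many
`n`, then so does the upper limit. -/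
lemma KLimsup_inter_nonempty {V : Type*} [PseudoMetricSpace V] {A : ℕ → Set V} {K : Set V}
    (hK : IsCompact K) (h : ∃ᶠ n in atTop, (A n ∩ K).Nonempty) : (KLimsup A ∩ K).Nonempty := by
  obtain ⟨φ, hφ, h⟩ := extraction_of_frequently_atTop h
  choose u huA huK using h
  obtain ⟨x, hx, ψ, hψ, hlim⟩ := hK.tendsto_subseq huK
  exact ⟨x, ⟨φ ∘ ψ, hφ.comp hψ, u ∘ ψ, fun n => huA _, hlim⟩, hx⟩

lemma eventually_disjoint_of_KLimsup {V : Type*} [PseudoMetricSpace V] {A : ℕ → Set V} {K : Set V}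
    (hK : IsCompact K) (h : Disjoint (KLimsup A) K) : ∀ᶠ n in atTop, Disjoint (A n) K := by
  by_contra hn
  refine (KLimsup_inter_nonempty hK (A := A) ?_).ne_empty (Set.disjoint_iff_inter_eq_empty.1 h)
  rw [not_eventually] at hn
  exact hn.mono fun n hn => Set.not_disjoint_iff_nonempty_inter.1 hn

/-- A nonzero functional attains its maximum over a compact set on the frontier. -/
lemma exists_frontier_ge {V : Type*} [NormedAddCommGroup V] [NormedSpace ℝ V] {E : Set V}
    (hE : IsCompact E) {f : StrongDual ℝ V} (hf : f ≠ 0) {x : V} (hx : x ∈ E) :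
    ∃ y ∈ frontier E, f x ≤ f y := by
  obtain ⟨y, hy, hmax⟩ := hE.exists_isMaxOn ⟨x, hx⟩ f.continuous.continuousOn
  refine ⟨y, ⟨subset_closure hy, fun hi => hf ?_⟩, hmax hx⟩
  exact (hmax.isLocalMax (mem_interior_iff_mem_nhds.1 hi)).hasFDerivAt_eq_zero f.hasFDerivAt

/-- A bounded set lies in the convex hull of its frontier: every line through a point of the
set leaves it on both sides. -/
lemma subset_convexHull_frontier {V : Type*} [NormedAddCommGroup V] [NormedSpace ℝ V]
    [Nontrivial V] {C : Set V} (hb : Bornology.IsBounded C) :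
    C ⊆ convexHull ℝ (frontier C) := by
  intro x hx
  have ray : ∀ v : V, v ≠ 0 → ∃ t : ℝ, 0 ≤ t ∧ x + t • v ∈ frontier C := by
    intro v hv
    have hpre : IsPreconnected ((fun t : ℝ => x + t • v) '' Set.Ici 0) :=
      isPreconnected_Ici.image _ (by fun_prop)
    obtain ⟨y, ⟨t, ht, rfl⟩, hy⟩ :=
      hpre.inter_frontier_nonempty_of_not_subset (E := C) ⟨x, ⟨0, by simp, by simp⟩, hx⟩ (by
        intro hsub
        obtain ⟨R, hR⟩ := hb.exists_norm_le
        have hvpos : 0 < ‖v‖ := norm_pos_iff.2 hv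
        have hR0 : 0 ≤ R := (norm_nonneg x).trans (hR x hx)
        have h1 := hR _ (hsub ⟨(2 * R + 1) / ‖v‖, by simp only [Set.mem_Ici]; positivity, rfl⟩)
        have h2 : ‖((2 * R + 1) / ‖v‖) • v‖ = 2 * R + 1 := by
          rw [norm_smul, Real.norm_of_nonneg (by positivity)]
          field_simp
        have h3 := norm_sub_le (x + ((2 * R + 1) / ‖v‖) • v) x
        rw [add_sub_cancel_left, h2] at h3
        linarith [hR x hx])
    exact ⟨t, ht, hy⟩
  obtain ⟨v, hv⟩ := exists_ne (0 : V)
  obtain ⟨t, ht, hty⟩ := ray v hv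
  obtain ⟨s, hs, hsy⟩ := ray (-v) (neg_ne_zero.2 hv)
  rcases (add_nonneg ht hs).eq_or_lt with h0 | hpos
  · have : t = 0 := by linarith
    subst this
    exact subset_convexHull ℝ _ (by simpa using hty)
  · have := (convex_convexHull ℝ (frontier C)) (subset_convexHull ℝ _ hty)
      (subset_convexHull ℝ _ hsy) (a := s / (t + s)) (b := t / (t + s)) (by positivity)
      (by positivity) (by field_simp; ring)
    convert this using 1
    have h1 : s / (t + s) + t / (t + s) = 1 := by field_simp; ring
    have h2 : s / (t + s) * t = t / (t + s) * s := by ring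
    calc x = (s / (t + s) + t / (t + s)) • x + (s / (t + s) * t - t / (t + s) * s) • v := by
          rw [h1, h2]; simp
      _ = _ := by module

/-- If a sphere misses the frontier of a convex set and the frontier meets the open ball, then the
frontier is contained in the ball. Connectedness of the sphere requires dimension at least two. -/
lemma frontier_subset_ball_of_disjoint_sphere {V : Type*} [NormedAddCommGroup V] [NormedSpace ℝ V]
    (hV : 1 < Module.rank ℝ V) {E : Set V} (hconv : Convex ℝ E) (hcl : IsClosed E) {R : ℝ}
    (hdis : Disjoint (frontier E) (sphere 0 R)) (hne : (frontier E ∩ ball 0 R).Nonempty) :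
    frontier E ⊆ ball 0 R := by
  have : Nontrivial V := by
    by_contra h
    rw [not_nontrivial_iff_subsingleton] at h
    simp at hV
  obtain ⟨a, ha, haR⟩ := hne
  intro b hb
  by_contra hbR
  have hR : 0 < R := pos_of_mem_ball haR
  have hmeet : (sphere 0 R ∩ E).Nonempty := by
    obtain ⟨c, hc, hcR⟩ := (convex_segment a b).isPreconnected.intermediate_value
      (left_mem_segment ℝ a b) (right_mem_segment ℝ a b) continuous_norm.continuousOn
      (show R ∈ Set.Icc ‖a‖ ‖b‖ from ⟨by simpa using (mem_ball_zero_iff.1 haR).le, by simpa using hbR⟩)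
    exact ⟨c, by simpa using hcR,
      hconv.segment_subset (hcl.frontier_subset ha) (hcl.frontier_subset hb) hc⟩
  have hsub : sphere 0 R ⊆ E := by
    by_contra hns
    obtain ⟨y, hy, hyE⟩ :=
      (isPreconnected_sphere hV 0 R).inter_frontier_nonempty_of_not_subset hmeet hns
    exact Set.disjoint_left.1 hdis hyE hy
  have hball : closedBall (0 : V) R ⊆ E := by
    rw [← convexHull_sphere_eq_closedBall (0 : V) hR.le]
    exact convexHull_min hsub hconv
  exact ha.2 (interior_maximal (ball_subset_closedBall.trans hball) isOpen_ball haR)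

lemma eventually_frontier_subset_ball {V : Type*} [NormedAddCommGroup V] [NormedSpace ℝ V]
    [ProperSpace V] (hV : 1 < Module.rank ℝ V) {E : ℕ → Set V} (hconv : ∀ n, Convex ℝ (E n))
    (hcl : ∀ n, IsClosed (E n)) {F : Set V} (hFne : F.Nonempty)
    (hK : KConv (fun n => frontier (E n)) F) {R : ℝ} (hR : F ⊆ ball 0 R) :
    ∀ᶠ n in atTop, frontier (E n) ⊆ ball 0 R := by
  have h1 := eventually_disjoint_of_KLimsup (A := fun n => frontier (E n)) (isCompact_sphere 0 R)
    (by rw [hK.2]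
        exact Set.disjoint_left.2 fun x hx hx' => (mem_ball.1 (hR hx)).ne (mem_sphere.1 hx'))
  obtain ⟨x, hx⟩ := hFne
  have hxl : x ∈ KLiminf (fun n => frontier (E n)) := by rw [hK.1]; exact hx
  obtain ⟨u, hu, hlim⟩ := hxl
  filter_upwards [h1, hlim (isOpen_ball.mem_nhds (hR hx))] with n hn hun
  exact frontier_subset_ball_of_disjoint_sphere hV (hconv n) (hcl n) hn ⟨u n, hu n, hun⟩

/-- If frontier points of the closed convex sets `E n` converge to `x`, then `x` is not interior to
any subset of the lower limit: unit vectors almost supporting `E n` near `x` accumulate at a unit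
vector `w`, and `x + r • w` cannot be a limit of points of `E n` for `r > 0`. -/
lemma notMem_interior_of_frontier_tendsto {V : Type*} [NormedAddCommGroup V]
    [InnerProductSpace ℝ V] [FiniteDimensional ℝ V] {E : ℕ → Set V} (hconv : ∀ n, Convex ℝ (E n))
    (hcl : ∀ n, IsClosed (E n)) {H : Set V} (hH : H ⊆ KLiminf E) {x : V}
    (hx : x ∈ KLiminf (fun n => frontier (E n))) : x ∉ interior H := by
  intro hxi
  obtain ⟨u, hu, hux⟩ := hx
  have hz : ∀ n, ∃ z, z ∉ E n ∧ dist (u n) z < 1 / ((n : ℝ) + 1) := by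
    intro n
    have h1 : u n ∈ closure (E n)ᶜ := by
      rw [closure_compl]; exact (hu n).2
    obtain ⟨z, hz, hd⟩ := Metric.mem_closure_iff.1 h1 (1 / ((n : ℝ) + 1)) (by positivity)
    exact ⟨z, hz, hd⟩
  choose z hzE hzd using hz
  have hzx : Tendsto z atTop (𝓝 x) := by
    refine hux.congr_dist ?_
    exact squeeze_zero (fun _ => dist_nonneg) (fun n => (hzd n).le)
      tendsto_one_div_add_atTop_nhds_zero_nat
  -- On the empty set the functional may vanish, so nonemptiness of `E n` is needed for `‖w‖ = 1`.
  have hw : ∀ n, ∃ w : V, w ∈ sphere (0 : V) 1 ∧ ∀ y ∈ E n, inner ℝ w (y - z n) ≤ 0 := by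
    intro n
    obtain ⟨f, c, hfE, hfz⟩ := geometric_hahn_banach_closed_point (hconv n) (hcl n) (hzE n)
    set g := (InnerProductSpace.toDual ℝ V).symm f with hg
    have hgf : ∀ y, inner ℝ g y = f y := fun y => InnerProductSpace.toDual_symm_apply
    have hg0 : g ≠ 0 := by
      intro h0
      have h1 := hfE _ ((hcl n).frontier_subset (hu n))
      rw [← hgf, h0, inner_zero_left] at h1
      rw [← hgf, h0, inner_zero_left] at hfz
      linarith
    refine ⟨‖g‖⁻¹ • g, ?_, fun y hy => ?_⟩
    · have : ‖g‖ ≠ 0 := norm_ne_zero_iff.2 hg0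
      simp [norm_smul, this]
    · rw [real_inner_smul_left, hgf, map_sub]
      exact mul_nonpos_of_nonneg_of_nonpos (by positivity) (by linarith [hfE y hy])
  choose w hw1 hwE using hw
  obtain ⟨w₀, hw₀, ψ, hψ, hlim⟩ := (isCompact_sphere (0 : V) 1).tendsto_subseq hw1
  obtain ⟨r, hr, hball⟩ := Metric.isOpen_iff.1 isOpen_interior x hxi
  have hw₀n : ‖w₀‖ = 1 := by simpa using hw₀
  have hmem : x + (r / 2) • w₀ ∈ KLiminf E := by
    refine hH (interior_subset (hball ?_))
    rw [mem_ball, dist_eq_norm, add_sub_cancel_left, norm_smul, hw₀n,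
      Real.norm_of_nonneg (by positivity)]
    linarith
  obtain ⟨y, hyE, hy⟩ := hmem
  have hl : Tendsto (fun k => inner ℝ (w (ψ k)) (y (ψ k) - z (ψ k))) atTop
      (𝓝 (inner ℝ w₀ (x + (r / 2) • w₀ - x))) :=
    hlim.inner ((hy.comp hψ.tendsto_atTop).sub (hzx.comp hψ.tendsto_atTop))
  have h0 := le_of_tendsto' hl fun k => hwE (ψ k) _ (hyE (ψ k))
  rw [add_sub_cancel_left, real_inner_smul_right, real_inner_self_eq_norm_sq, hw₀n] at h0
  linarith

/-- if `E_n` are convex compact subsets of `ℝ^p` (`p ≥ 2`) whose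
boundaries converge in the Painlevé–Kuratowski sense to a nonempty compact set `F`,
then `E_n` converges to `E = conv F` and `∂E = F`. -/
theorem stmt_17 {p : ℕ} (hp : 2 ≤ p) (E : ℕ → Set (EuclideanSpace ℝ (Fin p)))
    (hconv : ∀ n, Convex ℝ (E n)) (hcpt : ∀ n, IsCompact (E n))
    (F : Set (EuclideanSpace ℝ (Fin p))) (hFcpt : IsCompact F) (hFne : F.Nonempty)
    (hK : KConv (fun n => frontier (E n)) F) :
    KConv E (convexHull ℝ F) ∧ frontier (convexHull ℝ F) = F := by
  have hrank : 1 < Module.rank ℝ (EuclideanSpace ℝ (Fin p)) := by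
    rw [← Module.finrank_eq_rank, finrank_euclideanSpace_fin]
    exact_mod_cast hp
  have : Nonempty (Fin p) := ⟨⟨0, by omega⟩⟩
  have hcl : ∀ n, IsClosed (E n) := fun n => (hcpt n).isClosed
  obtain ⟨R, hR⟩ := hFcpt.isBounded.subset_ball 0
  have hbd := eventually_frontier_subset_ball hrank hconv hcl hFne hK hR
  set C := closure (convexHull ℝ F) with hC
  have hFC : convexHull ℝ F ⊆ C := subset_closure
  have hinf : convexHull ℝ F ⊆ KLiminf E := by
    refine convexHull_min ?_ (convex_KLiminf hconv)
    rw [← hK.1]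
    exact KLiminf_mono fun n => (hcl n).frontier_subset
  have hsup : KLimsup E ⊆ C := by
    rintro x ⟨φ, hφ, u, hu, hlim⟩
    by_contra hx
    obtain ⟨f, c, hfC, hfx⟩ :=
      geometric_hahn_banach_closed_point (convex_convexHull ℝ F).closure isClosed_closure hx
    have hf : f ≠ 0 := by
      rintro rfl
      obtain ⟨a, ha⟩ := hFne
      have := hfC a (hFC (subset_convexHull ℝ F ha))
      simp at this hfx
      linarith
    have hfreq : ∃ᶠ n in atTop,
        (frontier (E n) ∩ (closedBall 0 R ∩ {y | c ≤ f y})).Nonempty := by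
      have hev : ∀ᶠ k in atTop,
          (frontier (E (φ k)) ∩ (closedBall 0 R ∩ {y | c ≤ f y})).Nonempty := by
        filter_upwards [hφ.tendsto_atTop.eventually hbd,
          ((f.continuous.tendsto x).comp hlim).eventually (lt_mem_nhds hfx)] with k hk hck
        obtain ⟨y, hy, hle⟩ := exists_frontier_ge (hcpt (φ k)) hf (hu k)
        exact ⟨y, hy, ball_subset_closedBall (hk hy), hck.le.trans hle⟩
      exact hφ.tendsto_atTop.frequently hev.frequently
    obtain ⟨y, hy, -, hcy⟩ := KLimsup_inter_nonempty (A := fun n => frontier (E n))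
      ((isCompact_closedBall 0 R).inter_right (isClosed_le continuous_const f.continuous)) hfreq
    rw [hK.2] at hy
    exact (hfC y (hFC (subset_convexHull ℝ F hy))).not_ge hcy
  have hfront : frontier C ⊆ F := by
    intro x hx
    by_contra hxF
    obtain ⟨δ, hδ, hδF⟩ := Metric.nhds_basis_closedBall.mem_iff.1
      (hFcpt.isClosed.isOpen_compl.mem_nhds hxF)
    have hdis := eventually_disjoint_of_KLimsup (A := fun n => frontier (E n))
      (isCompact_closedBall x δ)
      (by rw [hK.2]; exact Set.disjoint_left.2 fun y hy hy' => hδF hy' hy)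
    obtain ⟨y, hy, hyx⟩ := Metric.mem_closure_iff.1 (isClosed_closure.frontier_subset hx) δ hδ
    obtain ⟨u, hu, hlim⟩ := hinf hy
    have hev : ∀ᶠ n in atTop, ball x δ ⊆ E n := by
      filter_upwards [hdis, hlim (isOpen_ball.mem_nhds (mem_ball'.2 hyx))] with n hn hun
      by_contra hns
      obtain ⟨a, ha, haE⟩ := (convex_ball x δ).isPreconnected.inter_frontier_nonempty_of_not_subset
        ⟨u n, hun, hu n⟩ hns
      exact Set.disjoint_left.1 hn haE (ball_subset_closedBall ha)
    obtain ⟨φ, hφ, hsub⟩ := extraction_of_eventually_atTop hev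
    have hball : ball x δ ⊆ C := fun a ha =>
      hsup ⟨φ, hφ, fun _ => a, fun n => hsub n ha, tendsto_const_nhds⟩
    exact hx.2 (interior_maximal hball isOpen_ball (mem_ball_self hδ))
  have hCb : Bornology.IsBounded C := (isBounded_convexHull.2 hFcpt.isBounded).closure
  have hCeq : C = convexHull ℝ F :=
    ((subset_convexHull_frontier hCb).trans (convexHull_mono hfront)).antisymm hFC
  rw [hCeq] at hsup hfront
  refine ⟨⟨((KLiminf_subset_KLimsup E).trans hsup).antisymm hinf,
    hsup.antisymm (hinf.trans (KLiminf_subset_KLimsup E))⟩, hfront.antisymm ?_⟩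
  intro x hx
  exact ⟨subset_closure (subset_convexHull ℝ F hx),
    notMem_interior_of_frontier_tendsto hconv hcl hinf (by rw [hK.1]; exact hx)⟩
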